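/- arXiv:1609.00608 — 3 statements merged into one kernel-verified Lean document; each statement's English description precedes it below -/
import Mathlib

section
/- (Krein-type formula for canonical extensions) Let 𝔥 and 𝒢 be complex Hilbert spaces, let T be a linear operator in 𝔥 with domain dom T, let Γ₀, Γ₁ : dom T → 𝒢 be linear maps, and let B : 𝒢 → 𝒢 be an everywhere defined linear operator. Set A₀ := T↾ker Γ₀ and A_[B] := T↾{f ∈ dom T : Γ₀f + BΓ₁f = 0}, and let λ ∈ ℂ be such that A₀ − λ is a bijection from ker Γ₀ onto 𝔥. Then Γ₀ is injective on ker(T−λ); let γ(λ) denote the inverse of Γ₀↾ker(T−λ), defined on 𝒢_λ := Γ₀(ker(T−λ)), and set M(λ) := Γ₁ ∘ γ(λ) : 𝒢_λ → 𝒢. Then: (1) ker(A_[B] − λ) = { γ(λ)φ : φ ∈ 𝒢_λ, φ + BM(λ)φ = 0 }; in particular, λ is an eigenvalue of A_[B] if and only if φ + BM(λ)φ = 0 for some nonzero φ ∈ 𝒢_λ. (2) If f ∈ dom A_[B] and g := (T−λ)f, then f₀ := (A₀−λ)^{-1}g ∈ ker Γ₀, the element ψ := −Γ₀(f − f₀)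 belongs to 𝒢_λ and satisfies ψ + BM(λ)ψ = BΓ₁f₀, and f = f₀ − γ(λ)ψ; that is, the Krein-type resolvent formula (A_[B]−λ)^{-1}g = (A₀−λ)^{-1}g − γ(λ)(I + BM(λ))^{-1}BΓ₁(A₀−λ)^{-1}g holds on ran(A_[B]−λ) whenever λ is not an eigenvalue of A_[B]. -/
noncomputable section

/-- **Theorem 2.4 (Krein-type formula for canonical extensions).**
Here `A₀ = T ↾ ker Γ₀`, `A_[B] = T ↾ ker(Γ₀ + BΓ₁)`, and `λ ∈ ℂ` is such that
`A₀ - λ` is a bijection from `ker Γ₀` onto `𝔥` (hypothesis `hbij`). The value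
`γ(λ)φ` for `φ ∈ 𝒢_λ := Γ₀(ker(T - λ))` is the unique `h ∈ ker(T - λ)` with
`Γ₀ h = φ`, and `M(λ)φ = Γ₁ h`. -/
theorem krein_type_formula
    {H G : Type*}
    [NormedAddCommGroup H] [InnerProductSpace ℂ H] [CompleteSpace H]
    [NormedAddCommGroup G] [InnerProductSpace ℂ G] [CompleteSpace G]
    (T : H →ₗ.[ℂ] H) (Γ₀ Γ₁ : T.domain →ₗ[ℂ] G) (B : G →ₗ[ℂ] G) (lam : ℂ)
    (hbij : ∀ g : H, ∃! f : T.domain, Γ₀ f = 0 ∧ T f - lam • (f : H) = g) :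
    -- `Γ₀` is injective on `ker(T - λ)`, so that `γ(λ)` is well defined
    (∀ f g : T.domain, T f = lam • (f : H) → T g = lam • (g : H) →
      Γ₀ f = Γ₀ g → f = g) ∧
    -- (1) `ker(A_[B] - λ) = { γ(λ)φ : φ ∈ 𝒢_λ, φ + BM(λ)φ = 0 }`
    ({x : H | ∃ f : T.domain, (f : H) = x ∧ Γ₀ f + B (Γ₁ f) = 0 ∧
        T f = lam • (f : H)} =
      {x : H | ∃ φ : G, ∃ h : T.domain, T h = lam • (h : H) ∧ Γ₀ h = φ ∧
        φ + B (Γ₁ h) = 0 ∧ (h : H) = x}) ∧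
    -- in particular, `λ` is an eigenvalue of `A_[B]` iff `φ + BM(λ)φ = 0`
    -- for some nonzero `φ ∈ 𝒢_λ`
    ((∃ f : T.domain, (f : H) ≠ 0 ∧ Γ₀ f + B (Γ₁ f) = 0 ∧ T f = lam • (f : H)) ↔
      (∃ φ : G, φ ≠ 0 ∧ ∃ h : T.domain, T h = lam • (h : H) ∧ Γ₀ h = φ ∧
        φ + B (Γ₁ h) = 0)) ∧
    -- (2) the Krein-type resolvent formula: if `f ∈ dom A_[B]`, `g = (T - λ)f` and
    -- `f₀ = (A₀ - λ)⁻¹ g`, then `h := γ(λ)ψ` with `ψ := -Γ₀(f - f₀)` lies in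
    -- `ker(T - λ)`, satisfies `ψ + BM(λ)ψ = BΓ₁ f₀`, and `f = f₀ - γ(λ)ψ`
    (∀ f : T.domain, Γ₀ f + B (Γ₁ f) = 0 →
      ∀ f₀ : T.domain, Γ₀ f₀ = 0 → T f₀ - lam • (f₀ : H) = T f - lam • (f : H) →
        ∃ h : T.domain, T h = lam • (h : H) ∧ Γ₀ h = -Γ₀ (f - f₀) ∧
          Γ₀ h + B (Γ₁ h) = B (Γ₁ f₀) ∧ (f : H) = (f₀ : H) - (h : H)) := by
  have hinj : ∀ f g : T.domain, T f = lam • (f : H) → T g = lam • (g : H) →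
      Γ₀ f = Γ₀ g → f = g := by
    intro f g hf hg hfg
    have hsub : Γ₀ (f - g) = 0 ∧ T (f - g) - lam • ((f - g : T.domain) : H) = 0 := by
      refine ⟨by rw [map_sub, hfg, sub_self], ?_⟩
      rw [T.map_sub, hf, hg, Submodule.coe_sub, smul_sub, sub_self]
    have hzero : Γ₀ 0 = 0 ∧ T 0 - lam • ((0 : T.domain) : H) = 0 := by
      simp [T.map_zero]
    exact sub_eq_zero.mp ((hbij 0).unique hsub hzero)
  refine ⟨hinj, ?_, ⟨?_, ?_⟩, ?_⟩
  · ext x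
    constructor
    · rintro ⟨f, hx, hB, hT⟩
      exact ⟨Γ₀ f, f, hT, rfl, hB, hx⟩
    · rintro ⟨_, h, hT, rfl, hB, hx⟩
      exact ⟨h, hx, hB, hT⟩
  · rintro ⟨f, hne, hB, hT⟩
    refine ⟨Γ₀ f, fun h0 => hne ?_, f, hT, rfl, hB⟩
    rw [hinj f 0 hT (by simp [T.map_zero]) (by rw [h0, map_zero]), Submodule.coe_zero]
  · rintro ⟨_, hne, h, hT, rfl, hB⟩
    refine ⟨h, fun h0 => hne ?_, hB, hT⟩
    rw [Submodule.coe_eq_zero.mp h0, map_zero]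
  · intro f hB f₀ hf₀ hT
    refine ⟨f₀ - f, ?_, ?_, ?_, ?_⟩
    · rw [T.map_sub, Submodule.coe_sub, smul_sub]
      exact sub_eq_sub_iff_sub_eq_sub.mp hT
    · rw [← map_neg, neg_sub]
    · simp only [map_sub, hf₀]
      rw [eq_neg_of_add_eq_zero_left hB]
      abel
    · rw [Submodule.coe_sub, sub_sub_cancel]
end
end

section
/- Let m > 0 and λ ∈ ℂ∖ℝ. Then there exist constants κ, κ', R > 0 and c₀ > 0 such that for all c ≥ c₀ one has (λ + mc²)²/c² − (mc)² = λ²/c² + 2mλ ∉ [0,∞) (so that G_{λ+mc²} is defined), and for all x ∈ ℝ³∖{0}: |G_{λ+mc²}(x) − K_λ(x)·P₊| ≤ (κ/c)|x|^{-2} if |x| < R, and |G_{λ+mc²}(x) − K_λ(x)·P₊| ≤ (κ/c)e^{-κ'|x|} if |x| ≥ R. -/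
noncomputable section

open MeasureTheory Complex Matrix
open scoped ENNReal

/-- The action of a complex `n × n` matrix on Euclidean space `ℂⁿ`. -/
def opApply {n : ℕ} (A : Matrix (Fin n) (Fin n) ℂ) :
    EuclideanSpace ℂ (Fin n) →L[ℂ] EuclideanSpace ℂ (Fin n) :=
  Matrix.toEuclideanCLM (𝕜 := ℂ) A

/-- The ℓ²-operator norm of a complex matrix, `|A|` in the paper. -/
def matNorm {n : ℕ} (A : Matrix (Fin n) (Fin n) ℂ) : ℝ := ‖opApply A‖

/-- Euclidean space `ℝ³`. -/
abbrev E3 := EuclideanSpace ℝ (Fin 3)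

/-- `4 × 4` complex matrices. -/
abbrev M4 := Matrix (Fin 4) (Fin 4) ℂ

/-- The Dirac matrix `α₁ = [[0, σ₁], [σ₁, 0]]`. -/
def alpha1 : M4 := !![0,0,0,1; 0,0,1,0; 0,1,0,0; 1,0,0,0]

/-- The Dirac matrix `α₂ = [[0, σ₂], [σ₂, 0]]`. -/
def alpha2 : M4 := !![0,0,0,-I; 0,0,I,0; 0,-I,0,0; I,0,0,0]

/-- The Dirac matrix `α₃ = [[0, σ₃], [σ₃, 0]]`. -/
def alpha3 : M4 := !![0,0,1,0; 0,0,0,-1; 1,0,0,0; 0,-1,0,0]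

/-- The Dirac matrix `β = [[I₂, 0], [0, -I₂]]`. -/
def betaM : M4 := !![1,0,0,0; 0,1,0,0; 0,0,-1,0; 0,0,0,-1]

/-- `α · x = x₁α₁ + x₂α₂ + x₃α₃`. -/
def alphaDot (x : E3) : M4 :=
  (x 0 : ℂ) • alpha1 + (x 1 : ℂ) • alpha2 + (x 2 : ℂ) • alpha3

/-- The integral kernel `G_λ` of the resolvent of the free Dirac operator, where `w`
is the square root of `λ²/c² - (mc)²` with positive imaginary part:
`G_λ(x) = ( (λ/c²)I₄ + mβ + (1 - i w|x|) i(α·x)/(c|x|²) ) e^{i w|x|}/(4π|x|)`. -/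
def Gker (m c : ℝ) (lam w : ℂ) (x : E3) : M4 :=
  (Complex.exp (I * w * (‖x‖ : ℂ)) / ((4 * Real.pi * ‖x‖ : ℝ) : ℂ)) •
    ((lam / (c : ℂ) ^ 2) • (1 : M4) + (m : ℂ) • betaM +
      (((1 : ℂ) - I * w * (‖x‖ : ℂ)) * I / ((c : ℂ) * (‖x‖ : ℂ) ^ 2)) • alphaDot x)

/-- The projection `P₊ = [[I₂, 0], [0, 0]]` onto the upper two components. -/
def Pplus : M4 := !![1,0,0,0; 0,1,0,0; 0,0,0,0; 0,0,0,0]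

/-- The matrix `K_λ(x)·P₊` where `K_λ(x) = 2m e^{i√(2mλ)|x|}/(4π|x|)` and `wK` is the
square root of `2mλ` with positive imaginary part. -/
def KP (m : ℝ) (wK : ℂ) (x : E3) : M4 :=
  (2 * (m : ℂ) * Complex.exp (I * wK * (‖x‖ : ℂ)) / ((4 * Real.pi * ‖x‖ : ℝ) : ℂ)) • Pplus

/-- The operator norm of matrices is subadditive. -/
lemma matNorm_add_le {n : ℕ} (A B : Matrix (Fin n) (Fin n) ℂ) :
    matNorm (A + B) ≤ matNorm A + matNorm B := by
  simpa only [matNorm, opApply, map_add] using norm_add_le _ _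

/-- The operator norm of matrices is absolutely homogeneous. -/
lemma matNorm_smul {n : ℕ} (a : ℂ) (A : Matrix (Fin n) (Fin n) ℂ) :
    matNorm (a • A) = ‖a‖ * matNorm A := by
  simp only [matNorm, opApply, map_smul, norm_smul]

lemma matNorm_nonneg {n : ℕ} (A : Matrix (Fin n) (Fin n) ℂ) : 0 ≤ matNorm A :=
  norm_nonneg _

/-- The matrix `α · x` is bounded by a multiple of `|x|`. -/
lemma matNorm_alphaDot_le (x : E3) :
    matNorm (alphaDot x) ≤ (matNorm alpha1 + matNorm alpha2 + matNorm alpha3) * ‖x‖ := by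
  have coord (i : Fin 3) (A : M4) : matNorm ((x i : ℂ) • A) ≤ matNorm A * ‖x‖ := by
    rw [matNorm_smul, mul_comm, Complex.norm_real]
    exact mul_le_mul_of_nonneg_left (PiLp.norm_apply_le x i) (matNorm_nonneg A)
  have h₁ := matNorm_add_le ((x 0 : ℂ) • alpha1 + (x 1 : ℂ) • alpha2) ((x 2 : ℂ) • alpha3)
  have h₂ := matNorm_add_le ((x 0 : ℂ) • alpha1) ((x 1 : ℂ) • alpha2)
  unfold alphaDot
  linarith [coord 0 alpha1, coord 1 alpha2, coord 2 alpha3]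

/-- A non-real complex number has a square root in the upper half plane. -/
lemma exists_sq_eq_im_pos {z : ℂ} (hz : z.im ≠ 0) : ∃ v : ℂ, v ^ 2 = z ∧ 0 < v.im := by
  obtain ⟨v, hv⟩ := IsAlgClosed.exists_pow_nat_eq z (n := 2) (by norm_num)
  have him : v.im ≠ 0 := by
    intro h
    apply hz
    rw [← hv, pow_two, Complex.mul_im, h]
    ring
  rcases lt_or_gt_of_ne him with h | h
  · exact ⟨-v, by rw [neg_sq, hv], by simpa using h⟩
  · exact ⟨v, hv, h⟩

/-- The square root in the upper half plane is unique. -/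
lemma eq_of_sq_eq_of_im_pos {v w : ℂ} (h : v ^ 2 = w ^ 2) (hv : 0 < v.im) (hw : 0 < w.im) :
    v = w := by
  rcases sq_eq_sq_iff_eq_or_eq_neg.mp h with h | h
  · exact h
  · rw [h, Complex.neg_im] at hv
    linarith

lemma norm_exp_I_mul_mul_ofReal (w : ℂ) (r : ℝ) :
    ‖Complex.exp (I * w * (r : ℂ))‖ = Real.exp (-(w.im * r)) := by
  rw [Complex.norm_exp]
  simp

/-- If `w` is at distance at most `s / 2` from `v` and `Im v = s`, then `e^{iwr}` and `e^{ivr}`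
differ by at most `|w - v| r e^{-sr/2}`. -/
lemma norm_exp_sub_exp_le {v w : ℂ} {r : ℝ} (hr : 0 ≤ r) (hwv : ‖w - v‖ ≤ v.im / 2) :
    ‖Complex.exp (I * w * (r : ℂ)) - Complex.exp (I * v * (r : ℂ))‖ ≤
      ‖w - v‖ * r * Real.exp (-(v.im / 2 * r)) := by
  have hfac : Complex.exp (I * w * (r : ℂ)) - Complex.exp (I * v * (r : ℂ)) =
      Complex.exp (I * v * (r : ℂ)) * (Complex.exp (I * (w - v) * (r : ℂ)) - 1) := by
    rw [mul_sub, ← Complex.exp_add, mul_one]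
    ring_nf
  have hnorm : ‖I * (w - v) * (r : ℂ)‖ = ‖w - v‖ * r := by
    simp [abs_of_nonneg hr]
  have hone := Complex.norm_exp_sub_sum_le_norm_mul_exp (I * (w - v) * (r : ℂ)) 1
  simp only [Finset.sum_range_one, pow_zero, Nat.factorial_zero, Nat.cast_one, div_one, pow_one,
    hnorm] at hone
  rw [hfac, norm_mul, norm_exp_I_mul_mul_ofReal]
  calc Real.exp (-(v.im * r)) * ‖Complex.exp (I * (w - v) * (r : ℂ)) - 1‖
      ≤ Real.exp (-(v.im * r)) * (‖w - v‖ * r * Real.exp (v.im / 2 * r)) := by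
        refine mul_le_mul_of_nonneg_left (hone.trans ?_) (Real.exp_pos _).le
        gcongr
    _ = ‖w - v‖ * r * (Real.exp (-(v.im * r)) * Real.exp (v.im / 2 * r)) := by ring
    _ = ‖w - v‖ * r * Real.exp (-(v.im / 2 * r)) := by
        rw [← Real.exp_add]
        ring_nf

/-- Square roots in the upper half plane depend continuously on their squares. -/
lemma norm_sub_mul_im_le {v w : ℂ} (hw : 0 < w.im) :
    ‖w - v‖ * v.im ≤ ‖w ^ 2 - v ^ 2‖ := by
  have him : v.im ≤ ‖w + v‖ :=
    (by simpa using hw.le : v.im ≤ (w + v).im).trans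
      ((le_abs_self _).trans (Complex.abs_im_le_norm _))
  calc ‖w - v‖ * v.im ≤ ‖w - v‖ * ‖w + v‖ := by gcongr
    _ = ‖w ^ 2 - v ^ 2‖ := by rw [← norm_mul]; ring_nf

/-- The difference of the kernels, with the singular leading terms matched. -/
lemma Gker_sub_KP (m : ℝ) {c : ℝ} (hc : c ≠ 0) (lam w v : ℂ) (x : E3) :
    Gker m c (lam + ((m * c ^ 2 : ℝ) : ℂ)) w x - KP m v x =
      (Complex.exp (I * w * (‖x‖ : ℂ)) / ((4 * Real.pi * ‖x‖ : ℝ) : ℂ) * (lam / (c : ℂ) ^ 2)) •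
          (1 : M4) +
        (Complex.exp (I * w * (‖x‖ : ℂ)) / ((4 * Real.pi * ‖x‖ : ℝ) : ℂ) *
          (((1 : ℂ) - I * w * (‖x‖ : ℂ)) * I / ((c : ℂ) * (‖x‖ : ℂ) ^ 2))) • alphaDot x +
        (2 * (m : ℂ) * (Complex.exp (I * w * (‖x‖ : ℂ)) - Complex.exp (I * v * (‖x‖ : ℂ))) /
          ((4 * Real.pi * ‖x‖ : ℝ) : ℂ)) • Pplus := by
  have hβ : betaM = (2 : ℂ) • Pplus - 1 := by
    ext i j
    fin_cases i <;> fin_cases j <;> norm_num [betaM, Pplus, Matrix.one_apply]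
  have hμ : (lam + ((m * c ^ 2 : ℝ) : ℂ)) / (c : ℂ) ^ 2 = lam / (c : ℂ) ^ 2 + m := by
    have : (c : ℂ) ≠ 0 := by exact_mod_cast hc
    push_cast
    field_simp
  rw [Gker, KP, hμ, hβ]
  module

/-- Pointwise bound on the difference of the kernels by a common exponential factor. -/
lemma matNorm_Gker_sub_KP_le {m c : ℝ} (hm : 0 < m) (hc : 1 ≤ c) (lam : ℂ) {w v : ℂ}
    (hwv : ‖w - v‖ ≤ v.im / 2) {D : ℝ} (hD : ‖w - v‖ ≤ D / c) {x : E3} (hx : x ≠ 0) :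
    matNorm (Gker m c (lam + ((m * c ^ 2 : ℝ) : ℂ)) w x - KP m v x) ≤
      Real.exp (-(v.im / 2 * ‖x‖)) / c *
        (‖lam‖ * matNorm (1 : M4) / ‖x‖ +
          (1 + (‖v‖ + v.im / 2) * ‖x‖) * (matNorm alpha1 + matNorm alpha2 + matNorm alpha3) /
            ‖x‖ ^ 2 +
          2 * m * D * matNorm Pplus) := by
  have hr : 0 < ‖x‖ := norm_pos_iff.mpr hx
  have hα := matNorm_alphaDot_le x
  have hexp : ‖Complex.exp (I * w * (‖x‖ : ℂ))‖ ≤ Real.exp (-(v.im / 2 * ‖x‖)) := by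
    rw [norm_exp_I_mul_mul_ofReal]
    have him : |(w - v).im| ≤ ‖w - v‖ := Complex.abs_im_le_norm _
    rw [Complex.sub_im] at him
    have : v.im / 2 ≤ w.im := by linarith [neg_abs_le (w.im - v.im)]
    gcongr
  have hdiff := norm_exp_sub_exp_le hr.le hwv
  have hw : ‖w‖ ≤ ‖v‖ + v.im / 2 := by
    linarith [norm_le_norm_add_norm_sub' w v]
  rw [Gker_sub_KP m (by positivity) lam w v x]
  set r := ‖x‖
  set e := Real.exp (-(v.im / 2 * r))
  set a := matNorm alpha1 + matNorm alpha2 + matNorm alpha3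
  have ha : 0 ≤ a :=
    add_nonneg (add_nonneg (matNorm_nonneg _) (matNorm_nonneg _)) (matNorm_nonneg _)
  have he : 0 < e := Real.exp_pos _
  have hc0 : 0 < c := by linarith
  have hnr : ‖((4 * Real.pi * r : ℝ) : ℂ)‖ = 4 * Real.pi * r := by
    rw [Complex.norm_real, Real.norm_of_nonneg (by positivity)]
  have hpr : r ≤ 4 * Real.pi * r := by nlinarith [Real.pi_gt_three]
  have hpre : ‖Complex.exp (I * w * (r : ℂ)) / ((4 * Real.pi * r : ℝ) : ℂ)‖ ≤ e / r := by
    rw [norm_div, hnr]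
    gcongr
  have hid : ‖Complex.exp (I * w * (r : ℂ)) / ((4 * Real.pi * r : ℝ) : ℂ) *
      (lam / (c : ℂ) ^ 2)‖ * matNorm (1 : M4) ≤ e / r * (‖lam‖ / c) * matNorm (1 : M4) := by
    rw [norm_mul, norm_div lam, norm_pow, Complex.norm_real, Real.norm_of_nonneg hc0.le]
    have : c ≤ c ^ 2 := by nlinarith
    have := matNorm_nonneg (1 : M4)
    gcongr
  have hmid : ‖Complex.exp (I * w * (r : ℂ)) / ((4 * Real.pi * r : ℝ) : ℂ) *
      (((1 : ℂ) - I * w * (r : ℂ)) * I / ((c : ℂ) * (r : ℂ) ^ 2))‖ * matNorm (alphaDot x) ≤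
      e / r * ((1 + (‖v‖ + v.im / 2) * r) / (c * r ^ 2)) * (a * r) := by
    have hlin : ‖(1 : ℂ) - I * w * (r : ℂ)‖ ≤ 1 + (‖v‖ + v.im / 2) * r := by
      refine (norm_sub_le _ _).trans ?_
      rw [norm_one, norm_mul, norm_mul, Complex.norm_I, one_mul, Complex.norm_real,
        Real.norm_of_nonneg hr.le]
      gcongr
    have hlin0 := (norm_nonneg _).trans hlin
    rw [norm_mul, norm_div (_ * I), norm_mul _ I, Complex.norm_I, mul_one, norm_mul (c : ℂ),
      norm_pow, Complex.norm_real, Complex.norm_real, Real.norm_of_nonneg hc0.le,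
      Real.norm_of_nonneg hr.le]
    have := matNorm_nonneg (alphaDot x)
    gcongr
  have hlast : ‖2 * (m : ℂ) * (Complex.exp (I * w * (r : ℂ)) - Complex.exp (I * v * (r : ℂ))) /
      ((4 * Real.pi * r : ℝ) : ℂ)‖ * matNorm Pplus ≤
      2 * m * (D / c * r * e) / r * matNorm Pplus := by
    rw [norm_div, hnr, norm_mul, norm_mul, Complex.norm_real, Real.norm_of_nonneg hm.le,
      Complex.norm_ofNat]
    have hle : ‖Complex.exp (I * w * (r : ℂ)) - Complex.exp (I * v * (r : ℂ))‖ ≤ D / c * r * e :=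
      hdiff.trans (by gcongr)
    have hle0 := (norm_nonneg _).trans hle
    have := matNorm_nonneg Pplus
    gcongr
  refine (matNorm_add_le _ _).trans ((add_le_add_left (matNorm_add_le _ _) _).trans ?_)
  rw [matNorm_smul, matNorm_smul, matNorm_smul]
  refine (add_le_add (add_le_add hid hmid) hlast).trans (le_of_eq ?_)
  field_simp

/-- For `t ≥ 1` the square dominates all lower powers. -/
lemma quadratic_le_mul_sq {A a B E t : ℝ} (hA : 0 ≤ A) (hB : 0 ≤ B) (hE : 0 ≤ E) (ht : 1 ≤ t) :
    A * t + a * t ^ 2 + B * t + E ≤ (A + a + B + E + 1) * t ^ 2 := by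
  have ht₂ : t ≤ t ^ 2 := le_self_pow₀ ht two_ne_zero
  have h₁ := mul_le_mul_of_nonneg_left ht₂ hA
  have h₂ := mul_le_mul_of_nonneg_left ht₂ hB
  have h₃ := mul_le_mul_of_nonneg_left (ht.trans ht₂) hE
  linarith

/-- The squared momentum at the energy `lam + mc²`. -/
lemma shifted_energy_sq (m : ℝ) {c : ℝ} (hc : c ≠ 0) (lam : ℂ) :
    (lam + ((m * c ^ 2 : ℝ) : ℂ)) ^ 2 / (c : ℂ) ^ 2 - ((m * c : ℝ) : ℂ) ^ 2 =
      lam ^ 2 / (c : ℂ) ^ 2 + 2 * (m : ℂ) * lam := by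
  have hc' : (c : ℂ) ≠ 0 := by exact_mod_cast hc
  push_cast
  field_simp
  ring

/-- For large `c` the shifted energy stays off the real axis. -/
lemma sq_div_add_ne_ofReal {m c : ℝ} {lam : ℂ} (hlam : lam.im ≠ 0) (hc : 0 < c)
    (hmc : ‖lam‖ < m * c ^ 2) (r : ℝ) :
    lam ^ 2 / (c : ℂ) ^ 2 + 2 * (m : ℂ) * lam ≠ (r : ℂ) := by
  intro h
  have hc' : (c : ℂ) ≠ 0 := by exact_mod_cast hc.ne'
  have h2 : lam ^ 2 + 2 * ((m * c ^ 2 : ℝ) : ℂ) * lam = ((r * c ^ 2 : ℝ) : ℂ) := by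
    field_simp at h
    push_cast
    linear_combination h
  have him := congrArg Complex.im h2
  rw [Complex.ofReal_im, pow_two lam] at him
  simp only [Complex.add_im, Complex.mul_im, Complex.mul_re, Complex.ofReal_re,
    Complex.ofReal_im, Complex.re_ofNat, Complex.im_ofNat] at him
  have hprod : 2 * lam.im * (lam.re + m * c ^ 2) = 0 := by linear_combination him
  have hre : lam.re + m * c ^ 2 = 0 := by simpa [hlam] using hprod
  linarith [neg_abs_le lam.re, Complex.abs_re_le_norm lam]

/-- **Estimate (5.14).** Pointwise kernel bound in the nonrelativistic limit:
`|G_{λ+mc²}(x) - K_λ(x)P₊| ≤ (κ/c)|x|⁻²` for `|x| < R` and `≤ (κ/c)e^{-κ'|x|}`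
for `|x| ≥ R`, for all sufficiently large `c`. -/
theorem nonrelativistic_kernel_bound (m : ℝ) (hm : 0 < m) (lam : ℂ) (hlam : lam.im ≠ 0) :
    ∃ κ κ' R c₀ : ℝ, 0 < κ ∧ 0 < κ' ∧ 0 < R ∧ 0 < c₀ ∧
      ∀ c : ℝ, c₀ ≤ c →
        (¬ ∃ r : ℝ, 0 ≤ r ∧ lam ^ 2 / (c : ℂ) ^ 2 + 2 * (m : ℂ) * lam = (r : ℂ)) ∧
        ∀ w wK : ℂ,
          w ^ 2 = (lam + ((m * c ^ 2 : ℝ) : ℂ)) ^ 2 / (c : ℂ) ^ 2 -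
            ((m * c : ℝ) : ℂ) ^ 2 → 0 < w.im →
          wK ^ 2 = 2 * (m : ℂ) * lam → 0 < wK.im →
          ∀ x : E3, x ≠ 0 →
            (‖x‖ < R →
              matNorm (Gker m c (lam + ((m * c ^ 2 : ℝ) : ℂ)) w x - KP m wK x) ≤
                κ / c * ‖x‖ ^ (-2 : ℝ)) ∧
            (R ≤ ‖x‖ →
              matNorm (Gker m c (lam + ((m * c ^ 2 : ℝ) : ℂ)) w x - KP m wK x) ≤
                κ / c * Real.exp (-(κ' * ‖x‖))) := by
  obtain ⟨v, hv, hvim⟩ := exists_sq_eq_im_pos (z := 2 * (m : ℂ) * lam)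
    (by simpa using ⟨hm.ne', hlam⟩)
  obtain ⟨D, hDdef⟩ : ∃ y, y = ‖lam‖ ^ 2 / v.im := ⟨_, rfl⟩
  obtain ⟨a, hadef⟩ : ∃ y, y = matNorm alpha1 + matNorm alpha2 + matNorm alpha3 := ⟨_, rfl⟩
  have ha : 0 ≤ a :=
    hadef ▸ add_nonneg (add_nonneg (matNorm_nonneg _) (matNorm_nonneg _)) (matNorm_nonneg _)
  have hN := matNorm_nonneg (1 : M4)
  have hP := matNorm_nonneg Pplus
  have hD : 0 ≤ D := by rw [hDdef]; positivity
  obtain ⟨A, hA⟩ : ∃ y, y = ‖lam‖ * matNorm (1 : M4) := ⟨_, rfl⟩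
  obtain ⟨B, hB⟩ : ∃ y, y = (‖v‖ + v.im / 2) * a := ⟨_, rfl⟩
  obtain ⟨E, hE⟩ : ∃ y, y = 2 * m * D * matNorm Pplus := ⟨_, rfl⟩
  have hA0 : 0 ≤ A := by rw [hA]; positivity
  have hB0 : 0 ≤ B := by rw [hB]; positivity
  have hE0 : 0 ≤ E := by rw [hE]; positivity
  refine ⟨A + a + B + E + 1, v.im / 2, 1, 1 + ‖lam‖ / m + 2 * D / v.im, by positivity,
    by positivity, one_pos, by positivity, fun c hc => ?_⟩
  have hq₁ : 0 ≤ ‖lam‖ / m := by positivity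
  have hq₂ : 0 ≤ 2 * D / v.im := by positivity
  have hc1 : 1 ≤ c := by linarith
  have hc0 : 0 < c := by linarith
  have hcsq : c ≤ c ^ 2 := by nlinarith
  have hmc : ‖lam‖ < m * c ^ 2 := by
    have : ‖lam‖ / m < c ^ 2 := by linarith
    rwa [div_lt_iff₀' hm] at this
  refine ⟨fun ⟨r, _, hr⟩ => sq_div_add_ne_ofReal hlam hc0 hmc r hr, ?_⟩
  intro w wK hw hwim hwK hwKim x hx
  obtain rfl : wK = v := eq_of_sq_eq_of_im_pos (hwK.trans hv.symm) hwKim hvim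
  have hsub : w ^ 2 - wK ^ 2 = lam ^ 2 / (c : ℂ) ^ 2 := by
    rw [hw, hwK, shifted_energy_sq m hc0.ne' lam]
    ring
  have hclose : ‖w - wK‖ ≤ D / c := by
    have h := norm_sub_mul_im_le (v := wK) hwim
    rw [hsub, norm_div, norm_pow, norm_pow, Complex.norm_real, Real.norm_of_nonneg hc0.le,
      ← le_div_iff₀ hvim] at h
    calc ‖w - wK‖ ≤ ‖lam‖ ^ 2 / c ^ 2 / wK.im := h
      _ ≤ ‖lam‖ ^ 2 / c / wK.im := by gcongr
      _ = D / c := by rw [hDdef]; ring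
  have hhalf : ‖w - wK‖ ≤ wK.im / 2 := by
    refine hclose.trans ?_
    have : 2 * D / wK.im ≤ c := by linarith
    rw [div_le_iff₀ hvim] at this
    rw [div_le_iff₀ hc0]
    linarith
  have hmain := matNorm_Gker_sub_KP_le hm hc1 lam hhalf hclose hx
  rw [← hadef] at hmain
  have hr : 0 < ‖x‖ := norm_pos_iff.mpr hx
  have hbr : ‖lam‖ * matNorm (1 : M4) / ‖x‖ +
      (1 + (‖wK‖ + wK.im / 2) * ‖x‖) * a / ‖x‖ ^ 2 + 2 * m * D * matNorm Pplus =
      A * ‖x‖⁻¹ + a * (‖x‖⁻¹) ^ 2 + B * ‖x‖⁻¹ + E := by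
    rw [hA, hB, hE]
    field_simp
    ring
  rw [hbr] at hmain
  constructor
  · intro hlt
    refine hmain.trans ?_
    have hinv : 1 ≤ ‖x‖⁻¹ := (one_le_inv₀ hr).mpr hlt.le
    have hpow : ‖x‖ ^ (-2 : ℝ) = (‖x‖⁻¹) ^ 2 := by
      rw [Real.rpow_neg hr.le, inv_pow]
      norm_num
    have hexp : Real.exp (-(wK.im / 2 * ‖x‖)) ≤ 1 := Real.exp_le_one_iff.mpr (by
      have : 0 ≤ wK.im / 2 * ‖x‖ := by positivity
      linarith)
    rw [hpow]
    calc Real.exp (-(wK.im / 2 * ‖x‖)) / c * (A * ‖x‖⁻¹ + a * (‖x‖⁻¹) ^ 2 + B * ‖x‖⁻¹ + E)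
        ≤ 1 / c * ((A + a + B + E + 1) * (‖x‖⁻¹) ^ 2) := by
          have hpoly := quadratic_le_mul_sq hA0 hB0 hE0 hinv (a := a)
          gcongr
      _ = (A + a + B + E + 1) / c * (‖x‖⁻¹) ^ 2 := by ring
  · intro hge
    refine hmain.trans ?_
    have hinv : ‖x‖⁻¹ ≤ 1 := inv_le_one_of_one_le₀ hge
    have hinv2 : (‖x‖⁻¹) ^ 2 ≤ 1 := pow_le_one₀ (by positivity) hinv
    calc Real.exp (-(wK.im / 2 * ‖x‖)) / c * (A * ‖x‖⁻¹ + a * (‖x‖⁻¹) ^ 2 + B * ‖x‖⁻¹ + E)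
        ≤ Real.exp (-(wK.im / 2 * ‖x‖)) / c * (A * 1 + a * 1 + B * 1 + E + 1) := by
          refine mul_le_mul_of_nonneg_left ?_ (by positivity)
          refine le_add_of_le_of_nonneg ?_ zero_le_one
          gcongr
      _ = (A + a + B + E + 1) / c * Real.exp (-(wK.im / 2 * ‖x‖)) := by ring
end
end

section
/- Let m, c > 0. For λ ∈ (−mc², mc²) set s(λ) := √((mc)² − λ²/c²) ≥ 0 and define t₃^λ(x) := ( i(α·x)/(c|x|²) + m(I₄ + β) ) · (1 − e^{-s(λ)|x|})/(4π|x|) for x ∈ ℝ³∖{0}. Then there exists a constant κ > 0, depending only on m and c, such that |t₃^λ(x)| ≤ κ·s(λ)·(1 + |x|^{-1}) for all λ ∈ (−mc², mc²) and all x ∈ ℝ³∖{0}. -/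
noncomputable section

open MeasureTheory Complex Matrix
open scoped ENNReal

/-- The kernel `t₃^λ(x) = ( i(α·x)/(c|x|²) + m(I₄ + β) ) (1 - e^{-s(λ)|x|})/(4π|x|)`
with `s(λ) = √((mc)² - λ²/c²)`. -/
def t3ker (m c lam : ℝ) (x : E3) : M4 :=
  (((1 - Real.exp (-(Real.sqrt ((m * c) ^ 2 - lam ^ 2 / c ^ 2) * ‖x‖))) /
      (4 * Real.pi * ‖x‖) : ℝ) : ℂ) •
    ((I / ((c : ℂ) * (‖x‖ : ℂ) ^ 2)) • alphaDot x + (m : ℂ) • ((1 : M4) + betaM))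

/-- The bound `|α·x| ≤ (|α₁| + |α₂| + |α₃|) |x|`. -/
theorem norm_opApply_alphaDot_le (x : E3) :
    ‖opApply (alphaDot x)‖ ≤
      (‖opApply alpha1‖ + ‖opApply alpha2‖ + ‖opApply alpha3‖) * ‖x‖ := by
  have hx (i : Fin 3) (A : M4) : ‖opApply ((x i : ℂ) • A)‖ ≤ ‖opApply A‖ * ‖x‖ := by
    have h : ‖x i‖ ≤ ‖x‖ := PiLp.norm_apply_le x i
    rw [opApply, map_smul, norm_smul, Complex.norm_real, mul_comm]
    exact mul_le_mul_of_nonneg_left h (norm_nonneg _)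
  have hadd (A B : M4) : ‖opApply (A + B)‖ ≤ ‖opApply A‖ + ‖opApply B‖ := by
    rw [opApply, map_add]
    exact norm_add_le _ _
  have h₁ := hadd ((x 0 : ℂ) • alpha1 + (x 1 : ℂ) • alpha2) ((x 2 : ℂ) • alpha3)
  have h₂ := hadd ((x 0 : ℂ) • alpha1) ((x 1 : ℂ) • alpha2)
  rw [alphaDot]
  linarith [hx 0 alpha1, hx 1 alpha2, hx 2 alpha3]

/-- The scalar factor of the kernel is bounded by `s`, uniformly in the radius `r`. -/
theorem abs_one_sub_exp_div_le {s r : ℝ} (hs : 0 ≤ s) (hr : 0 < r) :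
    |(1 - Real.exp (-(s * r))) / (4 * Real.pi * r)| ≤ s := by
  have hsr : 0 ≤ s * r := by positivity
  have hpi : 1 ≤ 4 * Real.pi := by linarith [Real.pi_gt_three]
  have hnonneg : 0 ≤ 1 - Real.exp (-(s * r)) :=
    sub_nonneg.2 (Real.exp_le_one_iff.2 (neg_nonpos.2 hsr))
  rw [abs_of_nonneg (by positivity), div_le_iff₀ (by positivity)]
  nlinarith [Real.add_one_le_exp (-(s * r)), mul_le_mul_of_nonneg_left hpi hsr]

/-- **Estimate for `t₃^λ` in Proposition 3.5:** `|t₃^λ(x)| ≤ κ s(λ)(1 + |x|⁻¹)`,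
uniformly in `λ ∈ (-mc², mc²)`. -/
theorem t3_bound (m c : ℝ) (hm : 0 < m) (hc : 0 < c) :
    ∃ κ : ℝ, 0 < κ ∧
      ∀ lam : ℝ, lam ∈ Set.Ioo (-(m * c ^ 2)) (m * c ^ 2) →
        ∀ x : E3, x ≠ 0 →
          matNorm (t3ker m c lam x) ≤
            κ * Real.sqrt ((m * c) ^ 2 - lam ^ 2 / c ^ 2) * (1 + ‖x‖⁻¹) := by
  obtain ⟨a, ha₀, ha⟩ : ∃ a : ℝ, 0 ≤ a ∧ ∀ x : E3, ‖opApply (alphaDot x)‖ ≤ a * ‖x‖ :=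
    ⟨_, by positivity, norm_opApply_alphaDot_le⟩
  obtain ⟨b, hb₀, hb⟩ : ∃ b : ℝ, 0 ≤ b ∧ ‖opApply ((1 : M4) + betaM)‖ ≤ b :=
    ⟨_, norm_nonneg _, le_rfl⟩
  refine ⟨a / c + m * b + 1, by positivity, fun lam _ x hx => ?_⟩
  have hr : 0 < ‖x‖ := norm_pos_iff.2 hx
  set s := Real.sqrt ((m * c) ^ 2 - lam ^ 2 / c ^ 2)
  have hs₀ : 0 ≤ s := Real.sqrt_nonneg _
  have halpha : ‖I / ((c : ℂ) * (‖x‖ : ℂ) ^ 2)‖ * ‖opApply (alphaDot x)‖ ≤ a / c * ‖x‖⁻¹ := by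
    have h : ‖I / ((c : ℂ) * (‖x‖ : ℂ) ^ 2)‖ = 1 / (c * ‖x‖ ^ 2) := by
      simp [abs_of_pos hc]
    rw [h]
    calc 1 / (c * ‖x‖ ^ 2) * ‖opApply (alphaDot x)‖
        ≤ 1 / (c * ‖x‖ ^ 2) * (a * ‖x‖) := by
          gcongr
          exact ha x
      _ = a / c * ‖x‖⁻¹ := by field_simp
  have hmatrix : ‖opApply ((I / ((c : ℂ) * (‖x‖ : ℂ) ^ 2)) • alphaDot x +
      (m : ℂ) • ((1 : M4) + betaM))‖ ≤ a / c * ‖x‖⁻¹ + m * b := by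
    rw [opApply, map_add, map_smul, map_smul]
    refine (norm_add_le _ _).trans (add_le_add ?_ ?_)
    · rw [norm_smul]
      exact halpha
    · rw [norm_smul, Complex.norm_real, Real.norm_of_nonneg hm.le]
      exact mul_le_mul_of_nonneg_left hb hm.le
  rw [matNorm, t3ker, opApply, map_smul, norm_smul, Complex.norm_real, Real.norm_eq_abs]
  calc _ ≤ s * (a / c * ‖x‖⁻¹ + m * b) :=
        mul_le_mul (abs_one_sub_exp_div_le hs₀ hr) hmatrix (norm_nonneg _) hs₀
    _ ≤ s * ((a / c + m * b + 1) * (1 + ‖x‖⁻¹)) := by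
        refine mul_le_mul_of_nonneg_left ?_ hs₀
        have h₁ : 0 ≤ a / c := by positivity
        have h₂ : 0 ≤ m * b * ‖x‖⁻¹ := by positivity
        have h₃ : 0 < ‖x‖⁻¹ := by positivity
        linarith
    _ = _ := by ring
end
end
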